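/- The infinite series identity 24·log(2) = Σ_{j=0}^{∞} (-1/27)^j · [(1/2)_j (1)_j] / [(4/3)_j (5/3)_j] · (28j + 17) holds, where log denotes the natural logarithm, the sum is over natural numbers j, and all quantities are real numbers. -/

import Mathlib

noncomputable def risingFactorial (a : ℝ) (k : ℕ) : ℝ := ∏ i ∈ Finset.range k, (a + i)

open intervalIntegral in
lemma beta_nat (b : ℕ) : ∀ a : ℕ, (∫ x in (0:ℝ)..1, x ^ a * (1 - x) ^ b) * ((a + b + 1).factorial : ℝ)
    = a.factorial * b.factorial := by
  induction b with
  | zero =>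
    intro a
    have h : (a:ℝ) + 1 ≠ 0 := by positivity
    simp [integral_pow, Nat.factorial_succ]
    field_simp
  | succ b ih =>
    intro a
    have key : ∫ x in (0:ℝ)..1, (((a:ℝ) + 1) * (x ^ a * (1 - x) ^ (b + 1))
        - ((b:ℝ) + 1) * (x ^ (a + 1) * (1 - x) ^ b)) = 0 := by
      have := integral_eq_sub_of_hasDerivAt (a := (0:ℝ)) (b := 1)
        (f := fun x : ℝ => x ^ (a + 1) * (1 - x) ^ (b + 1))
        (f' := fun x : ℝ => ((a:ℝ) + 1) * (x ^ a * (1 - x) ^ (b + 1))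
        - ((b:ℝ) + 1) * (x ^ (a + 1) * (1 - x) ^ b)) ?_ ?_
      · rw [this]; simp
      · intro x _
        have h1 := hasDerivAt_pow (a + 1) x
        have h2 := ((hasDerivAt_id x).const_sub 1).pow (b + 1)
        refine (h1.mul h2).congr_deriv ?_
        simp
        ring
      · exact (by fun_prop : Continuous _).intervalIntegrable _ _
    rw [integral_sub ((by fun_prop : Continuous _).intervalIntegrable _ _)
      ((by fun_prop : Continuous _).intervalIntegrable _ _), integral_const_mul,
      integral_const_mul] at key
    have h := ih (a + 1)
    rw [show a + 1 + b + 1 = a + (b + 1) + 1 by ring, Nat.factorial_succ a] at h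
    rw [Nat.factorial_succ b]
    push_cast at h ⊢
    have ha : (a:ℝ) + 1 ≠ 0 := by positivity
    apply mul_left_cancel₀ ha
    linear_combination ((a + (b + 1) + 1).factorial : ℝ) * key + ((b:ℝ) + 1) * h

lemma rf_succ (a : ℝ) (k : ℕ) : risingFactorial a (k + 1) = risingFactorial a k * (a + k) := by
  simp [risingFactorial, Finset.prod_range_succ]

lemma rf_one (k : ℕ) : risingFactorial 1 k = k.factorial := by
  induction k with
  | zero => simp [risingFactorial]
  | succ k ih => rw [rf_succ, ih, Nat.factorial_succ]; push_cast; ring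

lemma rf_half (k : ℕ) : risingFactorial (1/2) k * (4 ^ k * k.factorial) = (2 * k).factorial := by
  induction k with
  | zero => simp [risingFactorial]
  | succ k ih =>
    rw [rf_succ, show 2 * (k + 1) = 2 * k + 1 + 1 by ring, Nat.factorial_succ (2 * k + 1),
      Nat.factorial_succ (2 * k), Nat.factorial_succ k]
    push_cast
    rw [← ih]; ring

lemma rf_third (k : ℕ) : risingFactorial (4/3) k * risingFactorial (5/3) k *
    (2 * 27 ^ k * k.factorial) = (3 * k + 2).factorial := by
  induction k with
  | zero => simp [risingFactorial]
  | succ k ih =>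
    rw [rf_succ, rf_succ, show 3 * (k + 1) + 2 = 3 * k + 2 + 1 + 1 + 1 by ring,
      Nat.factorial_succ (3 * k + 2 + 1 + 1), Nat.factorial_succ (3 * k + 2 + 1),
      Nat.factorial_succ (3 * k + 2), Nat.factorial_succ k]
    push_cast
    rw [← ih]; ring

lemma rf_pos (a : ℝ) (ha : 0 < a) (k : ℕ) : 0 < risingFactorial a k := by
  unfold risingFactorial
  exact Finset.prod_pos fun i _ => by positivity

open intervalIntegral in
lemma term_eq (k : ℕ) : ∫ x in (0:ℝ)..1, (2 * (6 + 5 * x)) * (-(x ^ 2 * (1 - x)) / 4) ^ k =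
    (-1/27 : ℝ) ^ k * (risingFactorial (1/2) k * risingFactorial (1) k) /
        (risingFactorial (4/3) k * risingFactorial (5/3) k) * (28 * (k:ℝ) + 17) := by
  have e : ∀ x : ℝ, (2 * (6 + 5 * x)) * (-(x ^ 2 * (1 - x)) / 4) ^ k =
      (12 * (-1/4) ^ k) * (x ^ (2 * k) * (1 - x) ^ (k + 1)) +
      (22 * (-1/4) ^ k) * (x ^ (2 * k + 1) * (1 - x) ^ k) := by
    intro x
    rw [show -(x ^ 2 * (1 - x)) / 4 = (-1/4) * (x ^ 2 * (1 - x)) by ring, mul_pow, mul_pow,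
      ← pow_mul]
    ring
  simp_rw [e]
  rw [integral_add ((by fun_prop : Continuous _).intervalIntegrable _ _)
      ((by fun_prop : Continuous _).intervalIntegrable _ _), integral_const_mul,
      integral_const_mul]
  have h1 := beta_nat (k + 1) (2 * k)
  have h2 := beta_nat k (2 * k + 1)
  rw [show 2 * k + (k + 1) + 1 = 3 * k + 2 by ring, Nat.factorial_succ k] at h1
  rw [show 2 * k + 1 + k + 1 = 3 * k + 2 by ring, Nat.factorial_succ (2 * k)] at h2
  push_cast at h1 h2
  rw [← rf_third, ← rf_half] at h1 h2
  have p1 := rf_pos (4/3) (by norm_num) k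
  have p2 := rf_pos (5/3) (by norm_num) k
  rw [rf_one]
  have pf : (0:ℝ) < k.factorial := by positivity
  generalize (∫ x in (0:ℝ)..1, x ^ (2 * k) * (1 - x) ^ (k + 1)) = I at *
  generalize (∫ x in (0:ℝ)..1, x ^ (2 * k + 1) * (1 - x) ^ k) = J at *
  generalize risingFactorial (4/3) k = A at *
  generalize risingFactorial (5/3) k = B at *
  generalize risingFactorial (1/2) k = C at *
  generalize (k.factorial : ℝ) = f at *
  have q : (0:ℝ) < 27 ^ k := by positivity
  have q4 : (0:ℝ) < 4 ^ k := by positivity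
  rw [div_pow, div_pow]
  generalize (27:ℝ) ^ k = u at *
  generalize (4:ℝ) ^ k = v at *
  generalize (-1:ℝ) ^ k = s at *
  have h1' : I = C * (v * f) * ((k + 1) * f) / (A * B * (2 * u * f)) := by
    rw [eq_div_iff (by positivity)]; exact h1
  have h2' : J = (2 * k + 1) * (C * (v * f)) * f / (A * B * (2 * u * f)) := by
    rw [eq_div_iff (by positivity)]; exact h2
  rw [h1', h2']
  field_simp
  ring

open intervalIntegral in
lemma int_eq : ∫ x in (0:ℝ)..1, (2 * (6 + 5 * x)) * (1 - (-(x ^ 2 * (1 - x)) / 4))⁻¹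
    = 24 * Real.log 2 := by
  have hne : ∀ x ∈ Set.uIcc (0:ℝ) 1, 0 < 2 - x ∧ 0 < x ^ 2 + x + 2 := by
    intro x hx
    rw [Set.uIcc_of_le (by norm_num)] at hx
    exact ⟨by linarith [hx.2], by nlinarith [hx.1]⟩
  have hD : ∀ x : ℝ, 1 - (-(x ^ 2 * (1 - x)) / 4) = (2 - x) * (x ^ 2 + x + 2) / 4 := by
    intro x; ring
  simp_rw [hD]
  rw [integral_eq_sub_of_hasDerivAt
    (f := fun x : ℝ => 8 * (-2 * Real.log (2 - x) + Real.log (x ^ 2 + x + 2)))]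
  · norm_num
    rw [show (4:ℝ) = 2 ^ 2 by norm_num, Real.log_pow]; push_cast; ring
  · intro x hx
    obtain ⟨h1, h2⟩ := hne x hx
    have d1 := ((hasDerivAt_id x).const_sub 2).log h1.ne'
    have d2 := (((hasDerivAt_pow 2 x).add (hasDerivAt_id x)).add_const 2).log h2.ne'
    refine (((d1.const_mul (-2)).add d2).const_mul 8).congr_deriv ?_
    have h1' := h1.ne'
    have h2' := h2.ne'
    have h3 : x * (x + 1) + 2 ≠ 0 := by
      intro h; apply h2'; linarith
    simp
    field_simp
    ring
  · apply ContinuousOn.intervalIntegrable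
    apply ContinuousOn.mul (by fun_prop)
    apply ContinuousOn.inv₀ (by fun_prop)
    intro x hx
    obtain ⟨h1, h2⟩ := hne x hx
    positivity

theorem stmt_19 :
    24 * Real.log 2 =
      ∑' k : ℕ, (-1/27 : ℝ) ^ k * (risingFactorial (1/2) k * risingFactorial (1) k) /
        (risingFactorial (4/3) k * risingFactorial (5/3) k) * (28 * (k:ℝ) + 17) := by
  simp_rw [← term_eq]
  rw [← int_eq]
  symm
  apply HasSum.tsum_eq
  have hb : ∀ x ∈ Set.uIoc (0:ℝ) 1, |-(x ^ 2 * (1 - x)) / 4| ≤ 1 / 4 := by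
    intro x hx
    rw [Set.uIoc_of_le (by norm_num)] at hx
    obtain ⟨h0, h1⟩ := hx
    have a1 : 0 ≤ x ^ 2 * (1 - x) := mul_nonneg (sq_nonneg x) (by linarith)
    have a2 : x ^ 2 * (1 - x) ≤ 1 := mul_le_one₀ (by nlinarith) (by linarith) (by linarith)
    rw [abs_le]
    constructor <;> linarith
  refine intervalIntegral.hasSum_integral_of_dominated_convergence
    (fun k _ => 22 * (1/4 : ℝ) ^ k) ?_ ?_ ?_ ?_ ?_
  · intro k
    exact (by fun_prop : Continuous _).aestronglyMeasurable
  · intro k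
    refine Filter.Eventually.of_forall fun x hx => ?_
    have h := hb x hx
    rw [Set.uIoc_of_le (by norm_num)] at hx
    rw [norm_mul, norm_pow, Real.norm_eq_abs, Real.norm_eq_abs]
    have : |2 * (6 + 5 * x)| ≤ 22 := by
      rw [abs_le]; constructor <;> linarith [hx.1, hx.2]
    gcongr
  · refine Filter.Eventually.of_forall fun x hx => ?_
    exact (summable_geometric_of_lt_one (by norm_num) (by norm_num)).mul_left _
  · exact intervalIntegrable_const
  · refine Filter.Eventually.of_forall fun x hx => ?_
    exact (hasSum_geometric_of_abs_lt_one ((hb x hx).trans_lt (by norm_num))).mul_left _
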